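/- Let d ≥ 2 and γ ∈ ℝ. For x ∈ ℝ^d with 0 ≤ |x| < 1, ∫_{S^{d-1}} |x-ω|^γ dω = 2π^{d/2} Γ(d/2)^{-1} F(-γ/2, (2-γ-d)/2; d/2; |x|²), and for |x| > 1, ∫_{S^{d-1}} |x-ω|^γ dω = 2π^{d/2} Γ(d/2)^{-1} |x|^γ F(-γ/2, (2-γ-d)/2; d/2; |x|^{-2}). -/

import Mathlib

open Real Set MeasureTheory

/-- Pochhammer symbol (rising factorial) for a real argument. -/
noncomputable def poch (x : ℝ) (n : ℕ) : ℝ := ∏ i ∈ Finset.range n, (x + i)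

/-- Gauss hypergeometric series. -/
noncomputable def hyperF (a b c z : ℝ) : ℝ :=
  ∑' n : ℕ, poch a n * poch b n / (poch c n * (n.factorial : ℝ)) * z ^ n

lemma poch_zero (x : ℝ) : poch x 0 = 1 := by simp [poch]

lemma poch_succ (x : ℝ) (n : ℕ) : poch x (n + 1) = poch x n * (x + n) := by
  simp [poch, Finset.prod_range_succ]

lemma poch_add (x : ℝ) (m n : ℕ) : poch x (m + n) = poch x m * poch (x + m) n := by
  induction n with
  | zero => simp [poch_zero]
  | succ n ih => rw [← add_assoc, poch_succ, ih, poch_succ]; push_cast; ring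

lemma poch_succ_left (x : ℝ) (n : ℕ) : poch x (n + 1) = x * poch (x + 1) n := by
  rw [add_comm, poch_add]; simp [poch]

lemma poch_pos {x : ℝ} (hx : 0 < x) (n : ℕ) : 0 < poch x n :=
  Finset.prod_pos fun i _ => by positivity

lemma poch_abs_le (x : ℝ) (n : ℕ) : |poch x n| ≤ poch (|x| + 1) n := by
  unfold poch
  rw [Finset.abs_prod]
  refine Finset.prod_le_prod (fun i _ => abs_nonneg _) fun i _ => ?_
  calc |x + i| ≤ |x| + |(i : ℝ)| := abs_add_le _ _
    _ ≤ |x| + 1 + i := by rw [Nat.abs_cast]; linarith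

lemma poch_reflect (x : ℝ) (n : ℕ) : (-1) ^ n * poch (x - n) n = poch (1 - x) n := by
  unfold poch
  rw [← Finset.prod_range_reflect]
  have h0 : (-1 : ℝ) ^ n = ∏ _i ∈ Finset.range n, (-1 : ℝ) := by simp
  rw [h0, ← Finset.prod_mul_distrib]
  refine Finset.prod_congr rfl fun i hi => ?_
  rw [Finset.mem_range] at hi
  have h : n - 1 - i = n - (i + 1) := by omega
  rw [h, Nat.cast_sub (by omega)]; push_cast; ring

lemma chu_vandermonde (A : ℝ) (k : ℕ) : ∀ c : ℝ, 0 < c →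
    ∑ i ∈ Finset.range (k + 1), (k.choose i : ℝ) * ((-1) ^ i * (poch A i / poch c i)) =
      poch (c - A) k / poch c k := by
  induction k with
  | zero => intro c hc; simp [poch_zero]
  | succ k ih =>
    intro c hc
    have key : ∑ i ∈ Finset.range (k + 1 + 1),
          ((k + 1).choose i : ℝ) * ((-1) ^ i * (poch A i / poch c i)) =
        ∑ i ∈ Finset.range (k + 1), (k.choose i : ℝ) *
          ((-1) ^ i * (poch A i / poch c i) + (-1) ^ (i + 1) * (poch A (i + 1) / poch c (i + 1))) := by
      rw [Finset.sum_range_succ']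
      have e : ∀ i, ((k + 1).choose (i + 1) : ℝ) = k.choose i + k.choose (i + 1) := by
        intro i; rw [Nat.choose_succ_succ]; push_cast; rfl
      simp only [e, add_mul, mul_add, Finset.sum_add_distrib]
      rw [Finset.sum_range_succ (fun i => (k.choose (i + 1) : ℝ) * _), 
        Finset.sum_range_succ' (fun i => (k.choose i : ℝ) * ((-1) ^ i * (poch A i / poch c i)))]
      simp
      ring
    rw [key]
    have h2 : ∀ i, (-1 : ℝ) ^ i * (poch A i / poch c i) +
        (-1) ^ (i + 1) * (poch A (i + 1) / poch c (i + 1)) =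
        (c - A) / c * ((-1) ^ i * (poch A i / poch (c + 1) i)) := by
      intro i
      have hp := poch_pos hc i
      have hp1 := poch_pos (show 0 < c + 1 by linarith) i
      have hs : c * poch (c + 1) i = poch c i * (c + i) := by
        rw [← poch_succ_left, poch_succ]
      have hci : 0 < c + i := by positivity
      have hs' : poch (c + 1) i = poch c i * (c + i) / c := by
        field_simp; linarith
      rw [hs', poch_succ, poch_succ]
      field_simp
      ring
    simp only [h2, mul_left_comm _ ((c - A) / c)]
    rw [← Finset.mul_sum, ih (c + 1) (by linarith), poch_succ_left, poch_succ_left]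
    have : c + 1 - A = c - A + 1 := by ring
    rw [this]
    have hp1 := poch_pos (show 0 < c + 1 by linarith) k
    field_simp

lemma multichoose_poch (a : ℝ) (n : ℕ) :
    Ring.choose (a + n - 1) n = poch a n / n.factorial := by
  rw [← Ring.multichoose_eq, eq_div_iff (by positivity)]
  have h := Ring.factorial_nsmul_multichoose_eq_ascPochhammer a n
  rw [Polynomial.ascPochhammer_smeval_eq_eval] at h
  rw [nsmul_eq_mul] at h
  rw [mul_comm, h]
  clear h
  induction n with
  | zero => simp [poch_zero]
  | succ n ih => rw [ascPochhammer_succ_eval, ih, poch_succ]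

lemma binom_hasSum (a : ℝ) {y : ℝ} (hy : |y| < 1) :
    HasSum (fun n : ℕ => poch a n / n.factorial * y ^ n) ((1 - y) ^ (-a)) := by
  have h := (Real.one_div_one_sub_rpow_hasFPowerSeriesOnBall_zero a).hasSum (y := y)
    (by simpa [enorm_eq_nnnorm, ← NNReal.coe_lt_coe] using hy)
  have h1 : 0 ≤ 1 - y := by linarith [(abs_lt.1 hy).2]
  simp only [FormalMultilinearSeries.ofScalars_apply_eq, multichoose_poch, zero_add, smul_eq_mul,
    one_div, ← Real.rpow_neg h1] at h
  exact h

lemma tendsto_ratio_aux (p q : ℝ) : 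
    Filter.Tendsto (fun n : ℕ => (p + n) / (q + n)) Filter.atTop (nhds 1) := by
  have h := Filter.Tendsto.div
    ((tendsto_const_div_atTop_nhds_zero_nat p).add_const 1)
    ((tendsto_const_div_atTop_nhds_zero_nat q).add_const 1) (by norm_num)
  simp only [zero_add, div_one] at h
  refine h.congr' ?_
  filter_upwards [Filter.eventually_gt_atTop 0] with n hn
  have : (n : ℝ) ≠ 0 := by positivity
  simp only [Pi.div_apply]
  field_simp

/-- coefficients after the quadratic change of variables -/
noncomputable def Dc (a c : ℝ) (k : ℕ) : ℝ := poch a (2 * k) / (k.factorial * poch c k)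

/-- hypergeometric coefficients -/
noncomputable def Bc (a b c : ℝ) (n : ℕ) : ℝ :=
  poch a n * poch b n / (poch c n * (n.factorial : ℝ))

lemma Dc_pos {a c : ℝ} (ha : 0 < a) (hc : 0 < c) (k : ℕ) : 0 < Dc a c k := by
  have := poch_pos ha (2 * k); have := poch_pos hc k
  unfold Dc; positivity

lemma Dc_abs_le {a c : ℝ} (hc : 0 < c) (k : ℕ) : |Dc a c k| ≤ Dc (|a| + 1) c k := by
  have := poch_pos hc k
  unfold Dc
  rw [abs_div, abs_of_pos (show 0 < k.factorial * poch c k by positivity)]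
  gcongr
  exact poch_abs_le _ _

lemma Dc_summable_pos {a c : ℝ} (ha : 0 < a) (hc : 0 < c) {y : ℝ} (hy0 : 0 ≤ y) (hy : y < 1 / 4) :
    Summable fun k => Dc a c k * y ^ k := by
  rcases hy0.eq_or_lt with rfl | hy0
  · refine summable_of_ne_finset_zero (s := {0}) fun k hk => ?_
    simp at hk
    simp [hk]
  refine summable_of_ratio_test_tendsto_lt_one (l := 4 * y) (by linarith) ?_ ?_
  · exact Filter.Eventually.of_forall fun k => by have := Dc_pos ha hc k; positivity
  · have h := ((tendsto_ratio_aux (a / 2) 1).mul (tendsto_ratio_aux ((a + 1) / 2) c)).const_mul (4 * y)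
    rw [mul_one, mul_one] at h
    refine h.congr fun k => ?_
    have h1 := Dc_pos ha hc k
    have h2 := Dc_pos ha hc (k + 1)
    rw [Real.norm_of_nonneg (by positivity), Real.norm_of_nonneg (by positivity)]
    have := poch_pos ha (2 * k); have := poch_pos hc k
    have : 0 < c + k := by positivity
    unfold Dc
    rw [show 2 * (k + 1) = 2 * k + 1 + 1 by ring, poch_succ, poch_succ, poch_succ, Nat.factorial_succ]
    push_cast
    have : (1 : ℝ) + k = k + 1 := by ring
    rw [this, pow_succ]
    field_simp
    ring

lemma Dc_summable {a c : ℝ} (hc : 0 < c) {y : ℝ} (hy : |y| < 1 / 4) :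
    Summable fun k => |Dc a c k| * |y| ^ k :=
  (Dc_summable_pos (a := |a| + 1) (by positivity) hc (abs_nonneg y) hy).of_nonneg_of_le
    (fun k => by positivity) fun k => by gcongr; exact Dc_abs_le hc k

lemma Bc_summable {a b c : ℝ} (hc : 0 < c) {y : ℝ} (hy : |y| < 1) :
    Summable fun k => |Bc a b c k| * |y| ^ k := by
  by_cases hy0 : y = 0
  · refine summable_of_ne_finset_zero (s := {0}) fun k hk => ?_
    simp at hk
    simp [hk, hy0]
  have hy0 : 0 < |y| := by positivity
  have hB : ∀ k, 0 < Bc (|a| + 1) (|b| + 1) c k := fun k => by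
    have := poch_pos hc k
    have := poch_pos (show 0 < |a| + 1 by positivity) k
    have := poch_pos (show 0 < |b| + 1 by positivity) k
    unfold Bc; positivity
  have : Summable fun k => Bc (|a| + 1) (|b| + 1) c k * |y| ^ k := by
    refine summable_of_ratio_test_tendsto_lt_one (l := |y|) hy ?_ ?_
    · exact Filter.Eventually.of_forall fun k => by have := hB k; positivity
    · have h := ((tendsto_ratio_aux (|a| + 1) 1).mul (tendsto_ratio_aux (|b| + 1) c)).const_mul |y|
      rw [mul_one, mul_one] at h
      refine h.congr fun k => ?_
      have h1 := hB k
      have h2 := hB (k + 1)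
      rw [Real.norm_of_nonneg (by positivity), Real.norm_of_nonneg (by positivity)]
      have := poch_pos hc k
      have := poch_pos (show 0 < |a| + 1 by positivity) k
      have := poch_pos (show 0 < |b| + 1 by positivity) k
      have : 0 < c + k := by positivity
      unfold Bc
      rw [poch_succ, poch_succ, poch_succ, Nat.factorial_succ]
      push_cast
      have : (1 : ℝ) + k = k + 1 := by ring
      rw [this, pow_succ]
      field_simp
  refine this.of_nonneg_of_le (fun k => by positivity) fun k => ?_
  gcongr
  have := poch_pos hc k
  unfold Bc
  rw [abs_div, abs_of_pos (show 0 < poch c k * k.factorial by positivity), abs_mul]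
  gcongr
  · exact (abs_nonneg _).trans (poch_abs_le a k)
  · exact poch_abs_le _ _
  · exact poch_abs_le _ _

lemma analytic_of_summable (f : ℕ → ℝ) (R : ℝ)
    (h : ∀ y : ℝ, |y| < R → Summable fun k => |f k| * |y| ^ k) :
    AnalyticOnNhd ℝ (fun y => ∑' k, f k * y ^ k) {y | |y| < R} := by
  intro y hy
  change |y| < R at hy
  obtain ⟨r, hr1, hr2⟩ := exists_between hy
  have hr0 : 0 < r := (abs_nonneg y).trans_lt hr1
  let p := FormalMultilinearSeries.ofScalars ℝ f
  have hrad : ((Real.toNNReal r : NNReal) : ENNReal) ≤ p.radius := by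
    apply p.le_radius_of_summable_norm
    refine (h r (by rwa [abs_of_pos hr0])).congr fun k => ?_
    simp only [p, FormalMultilinearSeries.ofScalars_norm, abs_of_pos hr0, Real.norm_eq_abs,
      Real.coe_toNNReal r hr0.le]
  have hpos : 0 < p.radius := lt_of_lt_of_le (by simpa using hr0) hrad
  have := (p.hasFPowerSeriesOnBall hpos).analyticAt_of_mem (y := y) (by
    refine lt_of_lt_of_le ?_ hrad
    simp only [edist_zero_right, enorm_eq_nnnorm, ENNReal.coe_lt_coe, ← NNReal.coe_lt_coe]
    simpa [Real.coe_toNNReal r hr0.le] using hr1)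
  convert this using 1
  ext z
  simp [p, FormalMultilinearSeries.sum, mul_comm]

lemma quad_coeff (a c : ℝ) (hc : 0 < c) (N : ℕ) :
    ∑ p ∈ Finset.HasAntidiagonal.antidiagonal N,
      poch a (2 * p.1 + p.2) * (-1) ^ p.2 / (p.1.factorial * p.2.factorial * poch c p.1) =
    Bc a (a + 1 - c) c N := by
  rw [Finset.Nat.sum_antidiagonal_eq_sum_range_succ_mk]
  have h := chu_vandermonde (a + N) N c hc
  have hr := poch_reflect (c - a) N
  rw [show c - (a + N) = c - a - N by ring] at h
  have hb : a + 1 - c = 1 - (c - a) := by ring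
  have hN : (N.factorial : ℝ) ≠ 0 := by positivity
  have hp := (poch_pos hc N).ne'
  calc _ = ∑ i ∈ Finset.range (N + 1), poch a N / N.factorial * (-1) ^ N *
        ((N.choose i : ℝ) * ((-1) ^ i * (poch (a + N) i / poch c i))) := by
        refine Finset.sum_congr rfl fun i hi => ?_
        have hi' : i ≤ N := by simpa [Nat.lt_succ_iff] using hi
        have e1 : 2 * i + (N - i) = N + i := by omega
        have e2 : (-1 : ℝ) ^ (N - i) = (-1) ^ N * (-1) ^ i := by
          obtain ⟨m, rfl⟩ := Nat.exists_eq_add_of_le hi'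
          rw [Nat.add_sub_cancel_left, pow_add]
          have : (-1 : ℝ) ^ i * (-1) ^ i = 1 := by rw [← mul_pow]; simp
          linear_combination (-(-1 : ℝ) ^ m) * this
        have hpi := (poch_pos hc i).ne'
        simp only [e1, e2]
        rw [poch_add, Nat.cast_choose ℝ hi']
        field_simp
    _ = _ := by
        rw [← Finset.mul_sum, h, hb]
        unfold Bc
        rw [← hr]
        field_simp

lemma quad_small (a c : ℝ) (hc : 0 < c) {z : ℝ} (hz : |z| < 1 / 10) :
    (1 + z) ^ (-a) * ∑' k, Dc a c k * (z / (1 + z) ^ 2) ^ k =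
      ∑' n, Bc a (a + 1 - c) c n * z ^ n := by
  have hz' := abs_lt.1 hz
  have h1z : 0 < 1 + z := by linarith
  let T : ℕ × ℕ → ℝ := fun p =>
    poch a (2 * p.1 + p.2) * (-1) ^ p.2 / (p.1.factorial * p.2.factorial * poch c p.1) *
      z ^ (p.1 + p.2)
  obtain ⟨α, hαd⟩ : ∃ α, α = |a| + 1 := ⟨_, rfl⟩
  have hα : 0 < α := by rw [hαd]; positivity
  let U : ℕ × ℕ → ℝ := fun p =>
    poch α (2 * p.1 + p.2) / (p.1.factorial * p.2.factorial * poch c p.1) * |z| ^ (p.1 + p.2)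
  have hinner : ∀ k, HasSum (fun j => T (k, j))
      ((1 + z) ^ (-a) * (Dc a c k * (z / (1 + z) ^ 2) ^ k)) := by
    intro k
    have h := (binom_hasSum (a + (2 * k : ℕ)) (y := -z) (by rw [abs_neg]; linarith)).mul_left
      (Dc a c k * z ^ k)
    have e1 : (fun j => T (k, j)) = fun j => Dc a c k * z ^ k * (poch (a + (2 * k : ℕ)) j / j.factorial * (-z) ^ j) := by
      ext j
      simp only [T, Dc, poch_add]
      have hpk := (poch_pos hc k).ne'
      rw [neg_pow z, pow_add]
      field_simp
    have e2 : (1 + z) ^ (-a) * (Dc a c k * (z / (1 + z) ^ 2) ^ k) =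
        Dc a c k * z ^ k * (1 - -z) ^ (-(a + (2 * k : ℕ))) := by
      rw [sub_neg_eq_add, neg_add, Real.rpow_add h1z, Real.rpow_neg h1z.le (2 * k : ℕ),
        Real.rpow_natCast, pow_mul, div_pow]
      field_simp
    rw [e1, e2]
    exact h
  have hinnerU : ∀ k, HasSum (fun j => U (k, j))
      ((1 - |z|) ^ (-α) * (Dc α c k * (|z| / (1 - |z|) ^ 2) ^ k)) := by
    intro k
    have h1 : 0 < 1 - |z| := by linarith
    have h := (binom_hasSum (α + (2 * k : ℕ)) (y := |z|) (by rw [abs_abs]; linarith)).mul_left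
      (Dc α c k * |z| ^ k)
    have e1 : (fun j => U (k, j)) = fun j => Dc α c k * |z| ^ k * (poch (α + (2 * k : ℕ)) j / j.factorial * |z| ^ j) := by
      ext j
      simp only [U, Dc, poch_add]
      have hpk := (poch_pos hc k).ne'
      rw [pow_add]
      field_simp
    have e2 : (1 - |z|) ^ (-α) * (Dc α c k * (|z| / (1 - |z|) ^ 2) ^ k) =
        Dc α c k * |z| ^ k * (1 - |z|) ^ (-(α + (2 * k : ℕ))) := by
      rw [neg_add, Real.rpow_add h1, Real.rpow_neg h1.le (2 * k : ℕ),
        Real.rpow_natCast, pow_mul, div_pow]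
      field_simp
    rw [e1, e2]
    exact h
  have hU0 : ∀ p, 0 ≤ U p := fun p => by
    have := poch_pos hc p.1
    have := poch_pos hα (2 * p.1 + p.2)
    simp only [U]; positivity
  have hU : Summable U := by
    rw [summable_prod_of_nonneg hU0]
    refine ⟨fun k => (hinnerU k).summable, ?_⟩
    simp only [fun k => (hinnerU k).tsum_eq]
    refine (Dc_summable_pos hα hc (by positivity) ?_).mul_left _
    have h1 : 0 < 1 - |z| := by linarith
    rw [div_lt_iff₀ (by positivity)]
    nlinarith [abs_nonneg z]
  have hT : Summable T := by
    refine Summable.of_norm_bounded hU fun p => ?_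
    have := poch_pos hc p.1
    simp only [T, U]
    rw [norm_mul, norm_pow, norm_div, norm_mul, norm_pow, norm_neg, norm_one, one_pow, mul_one,
      Real.norm_of_nonneg (show 0 ≤ p.1.factorial * p.2.factorial * poch c p.1 by positivity),
      Real.norm_eq_abs, Real.norm_eq_abs]
    rw [hαd]
    gcongr
    exact poch_abs_le _ _
  have hL : ∑' p, T p = (1 + z) ^ (-a) * ∑' k, Dc a c k * (z / (1 + z) ^ 2) ^ k := by
    rw [hT.tsum_prod' fun k => (hinner k).summable]
    simp only [fun k => (hinner k).tsum_eq]
    rw [tsum_mul_left]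
  have hR : ∑' p, T p = ∑' n, Bc a (a + 1 - c) c n * z ^ n := by
    rw [← Finset.HasAntidiagonal.sigmaAntidiagonalEquivProd.tsum_eq]
    rw [Summable.tsum_sigma' (f := fun p => T (Finset.HasAntidiagonal.sigmaAntidiagonalEquivProd p)) (fun b => (hasSum_fintype _).summable)
      (Finset.HasAntidiagonal.sigmaAntidiagonalEquivProd.summable_iff.2 hT)]
    refine tsum_congr fun n => ?_
    rw [tsum_fintype, ← quad_coeff a c hc n, Finset.sum_mul]
    rw [← Finset.sum_coe_sort (Finset.HasAntidiagonal.antidiagonal n)]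
    refine Finset.sum_congr rfl fun p _ => ?_
    have hp : p.1.1 + p.1.2 = n := Finset.HasAntidiagonal.mem_antidiagonal.1 p.2
    simp [T, hp]
  rw [← hL, hR]

lemma quad_transform (a c : ℝ) (hc : 0 < c) {r : ℝ} (hr : |r| < 1) :
    (1 + r ^ 2) ^ (-a) * ∑' k, Dc a c k * (r ^ 2 / (1 + r ^ 2) ^ 2) ^ k =
      ∑' n, Bc a (a + 1 - c) c n * (r ^ 2) ^ n := by
  let f : ℝ → ℝ := fun r => (1 + r ^ 2) ^ (-a) * ∑' k, Dc a c k * (r ^ 2 / (1 + r ^ 2) ^ 2) ^ k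
  let g : ℝ → ℝ := fun r => ∑' n, Bc a (a + 1 - c) c n * (r ^ 2) ^ n
  have hD := analytic_of_summable (Dc a c) (1 / 4) (fun y hy => Dc_summable hc hy)
  have hB := analytic_of_summable (Bc a (a + 1 - c) c) 1 (fun y hy => Bc_summable hc hy)
  have hf : AnalyticOnNhd ℝ f (Ioo (-1) 1) := by
    intro r hr
    have hr2 : r ^ 2 < 1 := by nlinarith [hr.1, hr.2]
    have hpos : 0 < 1 + r ^ 2 := by positivity
    have h1 : AnalyticAt ℝ (fun r : ℝ => 1 + r ^ 2) r := by fun_prop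
    have h2 : AnalyticAt ℝ (fun r : ℝ => r ^ 2 / (1 + r ^ 2) ^ 2) r :=
      AnalyticAt.div (by fun_prop) (by fun_prop) (by positivity)
    have h3 : AnalyticAt ℝ (fun r : ℝ => (1 + r ^ 2) ^ (-a)) r := by
      have : (fun r : ℝ => (1 + r ^ 2) ^ (-a)) = fun r => Real.exp (Real.log (1 + r ^ 2) * (-a)) := by
        ext r
        rw [Real.rpow_def_of_pos (by positivity)]
      rw [this]
      exact ((h1.log hpos).mul analyticAt_const).rexp
    refine AnalyticAt.mul h3 ?_
    refine AnalyticAt.fun_comp (g := fun y => ∑' k, Dc a c k * y ^ k) (hD _ ?_) h2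
    rw [Set.mem_ofPred_eq]
    rw [abs_of_nonneg (by positivity), div_lt_iff₀ (by positivity)]
    nlinarith [sq_nonneg (1 - r ^ 2), mul_pos (sub_pos.2 hr2) (sub_pos.2 hr2)]
  have hg : AnalyticOnNhd ℝ g (Ioo (-1) 1) := by
    intro r hr
    have hr2 : r ^ 2 < 1 := by nlinarith [hr.1, hr.2]
    refine AnalyticAt.fun_comp (g := fun y => ∑' k, Bc a (a + 1 - c) c k * y ^ k) (hB _ ?_)
      (by fun_prop)
    rw [Set.mem_ofPred_eq]
    rwa [abs_of_nonneg (by positivity)]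
  refine hf.eqOn_of_preconnected_of_eventuallyEq hg isPreconnected_Ioo (z₀ := 0) (by simp) ?_
    (abs_lt.1 hr)
  have : ∀ᶠ r : ℝ in nhds 0, |r ^ 2| < 1 / 10 := by
    have hcont : Continuous fun r : ℝ => |r ^ 2| := by fun_prop
    exact hcont.continuousAt.eventually_lt continuousAt_const (by norm_num)
  filter_upwards [this] with r hr
  exact quad_small a c hc hr

/-- one-dimensional Gaussian moments -/
lemma gauss_half (q : ℕ) :
    ∫ y in Ioi (0 : ℝ), y ^ q * Real.exp (-y ^ 2) = 1 / 2 * Real.Gamma (((q : ℝ) + 1) / 2) := by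
  rw [← integral_rpow_mul_exp_neg_rpow (p := 2) (q := q) (by norm_num)
    (by have : (0 : ℝ) ≤ q := by positivity
        linarith)]
  simp only [Real.rpow_natCast, Real.rpow_two]

lemma gauss_even (k : ℕ) :
    ∫ y : ℝ, y ^ (2 * k) * Real.exp (-y ^ 2) = Real.Gamma ((k : ℝ) + 1 / 2) := by
  have h := integral_comp_abs (f := fun y : ℝ => y ^ (2 * k) * Real.exp (-y ^ 2))
  simp only [pow_mul, sq_abs] at h ⊢
  rw [h]
  simp only [← pow_mul]
  rw [gauss_half]
  push_cast
  rw [show (2 * (k : ℝ) + 1) / 2 = k + 1 / 2 by ring]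
  ring

lemma gauss_zero : ∫ y : ℝ, Real.exp (-y ^ 2) = √π := by
  have h := gauss_even 0
  simp only [mul_zero, pow_zero, one_mul, Nat.cast_zero, zero_add] at h
  rw [h, Real.Gamma_one_half_eq]

lemma gauss_space (d : ℕ) (hd : 2 ≤ d) (e : EuclideanSpace ℝ (Fin d)) (he : ‖e‖ = 1) (k : ℕ) :
    ∫ y : EuclideanSpace ℝ (Fin d), (inner ℝ e y) ^ (2 * k) * Real.exp (-‖y‖ ^ 2) =
      Real.Gamma ((k : ℝ) + 1 / 2) * √π ^ (d - 1) := by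
  let i0 : Fin d := ⟨0, by omega⟩
  have horth : Orthonormal ℝ (({i0} : Set (Fin d)).domRestrict (fun _ => e)) := by
    constructor
    · intro i; simpa using he
    · intro i j hij
      exact absurd (Subsingleton.elim i j) hij
  obtain ⟨b, hb⟩ := horth.exists_orthonormalBasis_extension_of_card_eq (by simp)
  have hb0 : b i0 = e := hb i0 rfl
  have h1 : ∀ y, (inner ℝ e y) ^ (2 * k) * Real.exp (-‖y‖ ^ 2) =
      (fun v : EuclideanSpace ℝ (Fin d) => (v i0) ^ (2 * k) * Real.exp (-‖v‖ ^ 2)) (b.repr y) := by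
    intro y
    simp only [LinearIsometryEquiv.norm_map, OrthonormalBasis.repr_apply_apply, hb0]
  rw [integral_congr_ae (Filter.Eventually.of_forall h1)]
  refine (b.measurePreserving_repr.integral_comp b.repr.toHomeomorph.measurableEmbedding
    (fun v : EuclideanSpace ℝ (Fin d) => (v i0) ^ (2 * k) * Real.exp (-‖v‖ ^ 2))).trans ?_
  have h2 : ∀ v : EuclideanSpace ℝ (Fin d), (v i0) ^ (2 * k) * Real.exp (-‖v‖ ^ 2) =
      (fun w : Fin d → ℝ => ∏ i, (if i = i0 then (w i) ^ (2 * k) else 1) * Real.exp (-(w i) ^ 2))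
        ((MeasurableEquiv.toLp 2 (Fin d → ℝ)).symm v) := by
    intro v
    rw [EuclideanSpace.norm_sq_eq, ← Finset.sum_neg_distrib, Real.exp_sum]
    simp only [Finset.prod_mul_distrib]
    simp
  rw [integral_congr_ae (Filter.Eventually.of_forall h2)]
  refine ((EuclideanSpace.volume_preserving_symm_measurableEquiv_toLp (Fin d)).integral_comp
    (MeasurableEquiv.measurableEmbedding _)
    (fun w : Fin d → ℝ => ∏ i, (if i = i0 then (w i) ^ (2 * k) else 1) *
      Real.exp (-(w i) ^ 2))).trans ?_
  rw [integral_fintype_prod_volume_eq_prod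
    (fun i (t : ℝ) => (if i = i0 then t ^ (2 * k) else 1) * Real.exp (-t ^ 2))]
  rw [← Finset.mul_prod_erase _ _ (Finset.mem_univ i0)]
  have h3 : ∀ i ∈ Finset.univ.erase i0,
      ∫ t : ℝ, (if i = i0 then t ^ (2 * k) else 1) * Real.exp (-t ^ 2) = √π := by
    intro i hi
    simp only [(Finset.mem_erase.1 hi).1, if_false, one_mul]
    exact gauss_zero
  rw [Finset.prod_congr rfl h3]
  simp only [if_true, gauss_even]
  simp

lemma polar_moment (d : ℕ) (hd : 2 ≤ d) (e : EuclideanSpace ℝ (Fin d)) (n : ℕ) :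
    ∫ y : EuclideanSpace ℝ (Fin d), (inner ℝ e y) ^ n * Real.exp (-‖y‖ ^ 2) =
      (∫ ω : Metric.sphere (0 : EuclideanSpace ℝ (Fin d)) 1,
        (inner ℝ e (ω : EuclideanSpace ℝ (Fin d))) ^ n ∂(volume.toSphere)) *
      (1 / 2 * Real.Gamma (((n : ℝ) + d) / 2)) := by
  let E := EuclideanSpace ℝ (Fin d)
  have hfr : Module.finrank ℝ (EuclideanSpace ℝ (Fin d)) = d := by simp
  have : Nonempty (Fin d) := ⟨⟨0, by omega⟩⟩
  have : Nontrivial (EuclideanSpace ℝ (Fin d)) := 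
    Module.nontrivial_of_finrank_pos (R := ℝ) (by rw [hfr]; omega)
  let μ : Measure (EuclideanSpace ℝ (Fin d)) := volume
  calc
    _ = ∫ x : ({(0 : EuclideanSpace ℝ (Fin d))}ᶜ : Set (EuclideanSpace ℝ (Fin d))),
          (inner ℝ e x.1) ^ n * Real.exp (-‖x.1‖ ^ 2) ∂(μ.comap (↑)) := by
      rw [integral_subtype_comap (measurableSet_singleton _).compl
        fun x : EuclideanSpace ℝ (Fin d) ↦ (inner ℝ e x) ^ n * Real.exp (-‖x‖ ^ 2),
        restrict_compl_singleton]
    _ = ∫ x, (inner ℝ e (x.1 : EuclideanSpace ℝ (Fin d))) ^ n *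
          (x.2.1 ^ n * Real.exp (-x.2.1 ^ 2)) ∂μ.toSphere.prod (.volumeIoiPow (d - 1)) := by
      have h := μ.measurePreserving_homeomorphUnitSphereProd.integral_comp
        (Homeomorph.measurableEmbedding _) (fun x =>
          (inner ℝ e (x.1 : EuclideanSpace ℝ (Fin d))) ^ n * (x.2.1 ^ n * Real.exp (-x.2.1 ^ 2)))
      rw [hfr] at h
      rw [← h]
      refine integral_congr_ae (Filter.Eventually.of_forall fun x => ?_)
      have hx : ‖x.1‖ ≠ 0 := norm_ne_zero_iff.2 x.2
      simp only [homeomorphUnitSphereProd_apply_snd_coe, homeomorphUnitSphereProd_apply_fst_coe,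
        inner_smul_right, mul_pow, inv_pow]
      field_simp
    _ = (∫ ω : Metric.sphere (0 : EuclideanSpace ℝ (Fin d)) 1,
        (inner ℝ e (ω : EuclideanSpace ℝ (Fin d))) ^ n ∂(volume.toSphere)) *
        ∫ x : Ioi (0 : ℝ), x.1 ^ n * Real.exp (-x.1 ^ 2) ∂(.volumeIoiPow (d - 1)) := by
      exact integral_prod_mul
        (fun ω : Metric.sphere (0 : EuclideanSpace ℝ (Fin d)) 1 =>
          (inner ℝ e (ω : EuclideanSpace ℝ (Fin d))) ^ n)
        (fun x : Ioi (0 : ℝ) => x.1 ^ n * Real.exp (-x.1 ^ 2))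
    _ = _ := by
      congr 1
      have hG := gauss_half (n + d - 1)
      rw [Nat.cast_sub (by omega)] at hG
      push_cast at hG
      rw [sub_add_cancel] at hG
      rw [← hG]
      simp only [Measure.volumeIoiPow, ENNReal.ofReal]
      rw [integral_withDensity_eq_integral_smul,
        integral_subtype_comap measurableSet_Ioi
          fun a : ℝ ↦ Real.toNNReal (a ^ (d - 1)) • (a ^ n * Real.exp (-a ^ 2)),
        setIntegral_congr_fun measurableSet_Ioi fun x hx ↦ ?_]
      · rw [NNReal.smul_def, Real.coe_toNNReal _ (pow_nonneg hx.out.le _), smul_eq_mul, ← mul_assoc,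
          ← pow_add]
        congr 2
        omega
      · exact (measurable_subtype_coe.pow_const _).real_toNNReal

lemma Gamma_poch {x : ℝ} (hx : 0 < x) (k : ℕ) :
    Real.Gamma ((k : ℝ) + x) = poch x k * Real.Gamma x := by
  induction k with
  | zero => simp [poch_zero]
  | succ k ih =>
    have : (k : ℝ) + x ≠ 0 := by positivity
    rw [show ((k + 1 : ℕ) : ℝ) + x = (k + x) + 1 by push_cast; ring, Real.Gamma_add_one this, ih,
      poch_succ]
    ring

lemma sphere_moment_even (d : ℕ) (hd : 2 ≤ d) (e : EuclideanSpace ℝ (Fin d)) (he : ‖e‖ = 1)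
    (k : ℕ) :
    ∫ ω : Metric.sphere (0 : EuclideanSpace ℝ (Fin d)) 1,
        (inner ℝ e (ω : EuclideanSpace ℝ (Fin d))) ^ (2 * k) ∂(volume.toSphere) =
      2 * Real.pi ^ ((d : ℝ) / 2) / Real.Gamma ((d : ℝ) / 2) *
        (poch (1 / 2) k / poch ((d : ℝ) / 2) k) := by
  have h := polar_moment d hd e (2 * k)
  have hd0 : 0 < (d : ℝ) / 2 := by
    have : 0 < d := by omega
    positivity
  rw [gauss_space d hd e he] at h
  push_cast at h
  rw [show (2 * (k : ℝ) + d) / 2 = k + d / 2 by ring, Gamma_poch hd0, Gamma_poch (by norm_num),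
    Real.Gamma_one_half_eq] at h
  have hG := Real.Gamma_pos_of_pos hd0
  have hp := poch_pos hd0 k
  have hpi : Real.pi ^ ((d : ℝ) / 2) = √π * √π ^ (d - 1) := by
    rw [← pow_succ', Nat.sub_add_cancel (by omega), Real.sqrt_eq_rpow, ← Real.rpow_natCast,
      ← Real.rpow_mul Real.pi_pos.le]
    congr 1; ring
  rw [hpi]
  field_simp
  field_simp at h
  linarith

lemma sphere_moment_odd (d : ℕ) (hd : 2 ≤ d) (e : EuclideanSpace ℝ (Fin d)) (k : ℕ) :
    ∫ ω : Metric.sphere (0 : EuclideanSpace ℝ (Fin d)) 1,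
        (inner ℝ e (ω : EuclideanSpace ℝ (Fin d))) ^ (2 * k + 1) ∂(volume.toSphere) = 0 := by
  have h := polar_moment d hd e (2 * k + 1)
  have h0 : ∫ y : EuclideanSpace ℝ (Fin d),
      (inner ℝ e y) ^ (2 * k + 1) * Real.exp (-‖y‖ ^ 2) = 0 := by
    have hn := integral_neg_eq_self (fun y : EuclideanSpace ℝ (Fin d) =>
      (inner ℝ e y) ^ (2 * k + 1) * Real.exp (-‖y‖ ^ 2)) volume
    simp only [inner_neg_right, norm_neg, Odd.neg_pow ⟨k, rfl⟩, neg_mul, integral_neg] at hn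
    linarith
  rw [h0] at h
  have : 0 < Real.Gamma (((2 * k + 1 : ℕ) + (d : ℝ)) / 2) := Real.Gamma_pos_of_pos (by positivity)
  rcases mul_eq_zero.1 h.symm with h | h
  · exact h
  · exfalso; linarith

lemma factorial_two_mul (k : ℕ) :
    ((2 * k).factorial : ℝ) = 4 ^ k * k.factorial * poch (1 / 2) k := by
  induction k with
  | zero => simp [poch_zero]
  | succ k ih =>
    rw [show 2 * (k + 1) = 2 * k + 1 + 1 by ring, Nat.factorial_succ, Nat.factorial_succ,
      Nat.factorial_succ, poch_succ]
    push_cast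
    rw [ih]
    ring

lemma sphere_integral (d : ℕ) (hd : 2 ≤ d) (γ : ℝ) (x : EuclideanSpace ℝ (Fin d)) (hx : ‖x‖ ≠ 1) :
    ∫ ω : Metric.sphere (0 : EuclideanSpace ℝ (Fin d)) 1,
        ‖x - (ω : EuclideanSpace ℝ (Fin d))‖ ^ γ ∂(volume.toSphere) =
      2 * Real.pi ^ ((d : ℝ) / 2) / Real.Gamma ((d : ℝ) / 2) *
        ((1 + ‖x‖ ^ 2) ^ (-(-γ / 2)) *
          ∑' k, Dc (-γ / 2) ((d : ℝ) / 2) k * (‖x‖ ^ 2 / (1 + ‖x‖ ^ 2) ^ 2) ^ k) := by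
  obtain ⟨e, he, hxe⟩ : ∃ e : EuclideanSpace ℝ (Fin d), ‖e‖ = 1 ∧ x = ‖x‖ • e := by
    by_cases h0 : x = 0
    · refine ⟨EuclideanSpace.single ⟨0, by omega⟩ 1, by simp, by simp [h0]⟩
    · have : ‖x‖ ≠ 0 := norm_ne_zero_iff.2 h0
      exact ⟨‖x‖⁻¹ • x, by rw [norm_smul]; simp [this], by rw [smul_smul, mul_inv_cancel₀ this, one_smul]⟩
  obtain ⟨a, ha⟩ : ∃ a, a = -γ / 2 := ⟨_, rfl⟩
  obtain ⟨c, hcd⟩ : ∃ c, c = (d : ℝ) / 2 := ⟨_, rfl⟩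
  have hc : 0 < c := by
    have : 0 < d := by omega
    rw [hcd]; positivity
  obtain ⟨r, hr⟩ : ∃ r, r = ‖x‖ := ⟨_, rfl⟩
  obtain ⟨C, hC⟩ : ∃ C, C = 2 * Real.pi ^ ((d : ℝ) / 2) / Real.Gamma ((d : ℝ) / 2) := ⟨_, rfl⟩
  have hr0 : 0 ≤ r := by rw [hr]; exact norm_nonneg _
  rw [← hr] at hx
  have hp : 0 < 1 + r ^ 2 := by positivity
  let s := 2 * r / (1 + r ^ 2)
  have hs0 : 0 ≤ s := by positivity
  have hs1 : s < 1 := by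
    rw [div_lt_one hp]
    have : 0 < (1 - r) ^ 2 := by
      have : 1 - r ≠ 0 := fun h => hx (by linarith)
      positivity
    nlinarith
  have ht : ∀ ω : Metric.sphere (0 : EuclideanSpace ℝ (Fin d)) 1,
      |s * inner ℝ e (ω : EuclideanSpace ℝ (Fin d))| ≤ s := by
    intro ω
    have h1 := abs_real_inner_le_norm e (ω : EuclideanSpace ℝ (Fin d))
    have h2 : ‖(ω : EuclideanSpace ℝ (Fin d))‖ = 1 := by simp
    rw [he, h2, one_mul] at h1
    rw [abs_mul, abs_of_nonneg hs0]
    exact mul_le_of_le_one_right hs0 h1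
  have hpt : ∀ ω : Metric.sphere (0 : EuclideanSpace ℝ (Fin d)) 1,
      ‖x - (ω : EuclideanSpace ℝ (Fin d))‖ ^ γ =
        (1 + r ^ 2) ^ (-a) * (1 - s * inner ℝ e (ω : EuclideanSpace ℝ (Fin d))) ^ (-a) := by
    intro ω
    have h2 : ‖(ω : EuclideanSpace ℝ (Fin d))‖ = 1 := by simp
    have h3 : ‖x - (ω : EuclideanSpace ℝ (Fin d))‖ ^ 2 =
        (1 + r ^ 2) * (1 - s * inner ℝ e (ω : EuclideanSpace ℝ (Fin d))) := by
      rw [norm_sub_sq_real, h2, ← hr]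
      have : inner ℝ x (ω : EuclideanSpace ℝ (Fin d)) =
          r * inner ℝ e (ω : EuclideanSpace ℝ (Fin d)) := by
        rw [hxe, inner_smul_left, ← hr]; simp
      rw [this]
      simp only [s]
      field_simp
      ring
    rw [← Real.mul_rpow hp.le (by have := (abs_le.1 (ht ω)).2; linarith), ← h3,
      ← Real.rpow_natCast, ← Real.rpow_mul (norm_nonneg _), ha]
    congr 1
    push_cast; ring
  have hsum : Summable fun n : ℕ => (1 + r ^ 2) ^ (-a) * |poch a n / n.factorial * s ^ n| :=
    ((binom_hasSum a (y := s) (by rwa [abs_of_nonneg hs0])).summable.abs).mul_left _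
  have key := hasSum_integral_of_dominated_convergence
    (μ := (volume : Measure (EuclideanSpace ℝ (Fin d))).toSphere)
    (F := fun (n : ℕ) (ω : Metric.sphere (0 : EuclideanSpace ℝ (Fin d)) 1) =>
      (1 + r ^ 2) ^ (-a) * (poch a n / n.factorial *
        (s * inner ℝ e (ω : EuclideanSpace ℝ (Fin d))) ^ n))
    (f := fun ω => ‖x - (ω : EuclideanSpace ℝ (Fin d))‖ ^ γ)
    (fun n _ => (1 + r ^ 2) ^ (-a) * |poch a n / n.factorial * s ^ n|)
    (fun n => by
      apply Continuous.aestronglyMeasurable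
      fun_prop)
    (fun n => Filter.Eventually.of_forall fun ω => by
      rw [norm_mul, Real.norm_of_nonneg (by positivity)]
      gcongr
      rw [Real.norm_eq_abs, abs_mul, abs_mul, abs_pow, abs_pow, abs_of_nonneg hs0]
      gcongr
      exact ht ω)
    (Filter.Eventually.of_forall fun ω => hsum)
    (integrable_const _)
    (Filter.Eventually.of_forall fun ω => by
      simp only [hpt]
      exact (binom_hasSum a ((ht ω).trans_lt hs1)).mul_left _)
  have hterm : ∀ n : ℕ, ∫ ω : Metric.sphere (0 : EuclideanSpace ℝ (Fin d)) 1,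
      (1 + r ^ 2) ^ (-a) * (poch a n / n.factorial *
        (s * inner ℝ e (ω : EuclideanSpace ℝ (Fin d))) ^ n) ∂(volume.toSphere) =
      (1 + r ^ 2) ^ (-a) * (poch a n / n.factorial * (s ^ n *
        ∫ ω : Metric.sphere (0 : EuclideanSpace ℝ (Fin d)) 1,
          (inner ℝ e (ω : EuclideanSpace ℝ (Fin d))) ^ n ∂(volume.toSphere))) := by
    intro n
    simp only [mul_pow, integral_const_mul]
  simp only [hterm] at key
  have hinj : Function.Injective (fun k : ℕ => 2 * k) := fun i j h => by
    simp only at h; omega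
  rw [← hinj.hasSum_iff (by
    intro n hn
    obtain ⟨k, hk⟩ : ∃ k, n = 2 * k + 1 := by
      rcases Nat.even_or_odd' n with ⟨k, h | h⟩
      · exact absurd ⟨k, h.symm⟩ hn
      · exact ⟨k, h⟩
    simp only [hk, sphere_moment_odd d hd e k, mul_zero])] at key
  rw [← key.tsum_eq, ← hr, ← ha, ← hcd, ← tsum_mul_left, ← tsum_mul_left]
  refine tsum_congr fun k => ?_
  simp only [Function.comp_apply, sphere_moment_even d hd e he k, ← hcd, factorial_two_mul, Dc]
  have h1 := poch_pos hc k
  have h2 := poch_pos (show (0 : ℝ) < 1 / 2 by norm_num) k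
  have h3 : s ^ (2 * k) = 4 ^ k * (r ^ 2 / (1 + r ^ 2) ^ 2) ^ k := by
    rw [pow_mul, ← mul_pow]
    simp only [s]
    congr 1
    rw [div_pow]; ring
  rw [h3]
  field_simp

theorem sphere_potential_hyper (d : ℕ) (hd : 2 ≤ d) (γ : ℝ)
    (x : EuclideanSpace ℝ (Fin d)) :
    (‖x‖ < 1 →
      ∫ ω : Metric.sphere (0 : EuclideanSpace ℝ (Fin d)) 1,
          ‖x - (ω : EuclideanSpace ℝ (Fin d))‖ ^ γ ∂(volume.toSphere) =
        2 * Real.pi ^ ((d : ℝ) / 2) / Real.Gamma ((d : ℝ) / 2) *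
          hyperF (-γ / 2) ((2 - γ - (d : ℝ)) / 2) ((d : ℝ) / 2) (‖x‖ ^ 2)) ∧
    (1 < ‖x‖ →
      ∫ ω : Metric.sphere (0 : EuclideanSpace ℝ (Fin d)) 1,
          ‖x - (ω : EuclideanSpace ℝ (Fin d))‖ ^ γ ∂(volume.toSphere) =
        2 * Real.pi ^ ((d : ℝ) / 2) / Real.Gamma ((d : ℝ) / 2) * ‖x‖ ^ γ *
          hyperF (-γ / 2) ((2 - γ - (d : ℝ)) / 2) ((d : ℝ) / 2) (‖x‖ ^ 2)⁻¹) := by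
  have hc : 0 < (d : ℝ) / 2 := by
    have : 0 < d := by omega
    positivity
  have hb : (2 - γ - (d : ℝ)) / 2 = -γ / 2 + 1 - (d : ℝ) / 2 := by ring
  have hF : ∀ z, hyperF (-γ / 2) ((2 - γ - (d : ℝ)) / 2) ((d : ℝ) / 2) z =
      ∑' n, Bc (-γ / 2) (-γ / 2 + 1 - (d : ℝ) / 2) ((d : ℝ) / 2) n * z ^ n := by
    intro z; rw [hb]; rfl
  constructor
  · intro h
    rw [sphere_integral d hd γ x h.ne, hF, quad_transform _ _ hc (by rwa [abs_norm])]
  · intro h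
    have hx : 0 < ‖x‖ := by linarith
    rw [sphere_integral d hd γ x h.ne', hF, mul_assoc]
    congr 1
    rw [← inv_pow, ← quad_transform _ _ hc (r := ‖x‖⁻¹)
      (by rw [abs_of_pos (by positivity)]; exact inv_lt_one_of_one_lt₀ h), ← mul_assoc]
    have e1 : ‖x‖ ^ 2 / (1 + ‖x‖ ^ 2) ^ 2 = ‖x‖⁻¹ ^ 2 / (1 + ‖x‖⁻¹ ^ 2) ^ 2 := by
      field_simp
      ring
    have e2 : (1 + ‖x‖ ^ 2) ^ (-(-γ / 2)) = ‖x‖ ^ γ * (1 + ‖x‖⁻¹ ^ 2) ^ (-(-γ / 2)) := by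
      have h3 : 1 + ‖x‖ ^ 2 = ‖x‖ ^ 2 * (1 + ‖x‖⁻¹ ^ 2) := by field_simp; ring
      have h4 : ‖x‖ ^ γ = (‖x‖ ^ 2) ^ (-(-γ / 2)) := by
        rw [← Real.rpow_natCast, ← Real.rpow_mul hx.le]
        congr 1
        push_cast; ring
      rw [h3, h4, Real.mul_rpow (by positivity) (by positivity)]
    rw [e1, e2]
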